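/- arXiv:2405.00324 — 2 statements merged into one kernel-verified Lean document; each statement's English description precedes it below -/
import Mathlib

section
/- Let B : ℝ³ × I → ℝ³ (I an open time interval) be C¹ in time and C² in space, solving the resistivity-free electron MHD system ∂ₜB + ∇×((∇×B)×B) = 0, ∇·B(·,t) = 0, and let J = ∇×B. Suppose B(x₀,t₀) ≠ 0 at a point (x₀,t₀). Then at (x₀,t₀) the function |B| satisfies ∂ₜ|B| − (J·∇)|B| = S |B|, where S(x,t) = −((B/|B|)·∇)J · (B/|B|) = −((B·∇)J)·B / |B|². -/
noncomputable section

open MeasureTheory Real Set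
open scoped RealInnerProductSpace

abbrev R3 := EuclideanSpace ℝ (Fin 3)

def toR3 (v : Fin 3 → ℝ) : R3 := (WithLp.equiv 2 (Fin 3 → ℝ)).symm v

/-- j-th partial derivative of a scalar function. -/
def pd (j : Fin 3) (f : R3 → ℝ) (x : R3) : ℝ :=
  fderiv ℝ f x (EuclideanSpace.single j 1)

/-- curl of a vector field on ℝ³. -/
def curl (F : R3 → R3) (x : R3) : R3 :=
  toR3 ![pd 1 (fun y => F y 2) x - pd 2 (fun y => F y 1) x,
         pd 2 (fun y => F y 0) x - pd 0 (fun y => F y 2) x,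
         pd 0 (fun y => F y 1) x - pd 1 (fun y => F y 0) x]

/-- divergence of a vector field on ℝ³. -/
def divg (F : R3 → R3) (x : R3) : ℝ :=
  pd 0 (fun y => F y 0) x + pd 1 (fun y => F y 1) x + pd 2 (fun y => F y 2) x

/-- cross product on ℝ³. -/
def cross (u v : R3) : R3 :=
  toR3 ![u 1 * v 2 - u 2 * v 1, u 2 * v 0 - u 0 * v 2, u 0 * v 1 - u 1 * v 0]

/-- the advective derivative (u·∇)v. -/
def adv (u v : R3 → R3) (x : R3) : R3 :=
  toR3 (fun i => ∑ j, u x j * pd j (fun y => v y i) x)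

/-- B is a pointwise solution of resistivity-free electron MHD at time t. -/
def IsEMHDAt (B : ℝ → R3 → R3) (t : ℝ) (x : R3) : Prop :=
  deriv (fun τ => B τ x) t + curl (fun y => cross (curl (B t) y) (B t y)) x = 0
    ∧ divg (B t) x = 0

/-!
Ideal electron MHD freezes `B` into the velocity field `-J`, where `J = ∇×B`: since `∇·J = 0` and
`∇·B = 0`, the identity for `∇×(J×B)` turns the equation into `∂ₜB = (J·∇)B - (B·∇)J`. Pairing it
with `B`, and using that the derivative of `|B|` in time or along a vector is the pairing of
`B / |B|` with that derivative of `B`, gives the growth rate of `|B|`.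
-/

section Norm

variable {E F : Type*} [NormedAddCommGroup E] [NormedSpace ℝ E]
  [NormedAddCommGroup F] [InnerProductSpace ℝ F]

theorem fderiv_norm_eq_inner_div {f : E → F} {x : E} (hf : DifferentiableAt ℝ f x) (hx : f x ≠ 0)
    (v : E) : fderiv ℝ (fun y => ‖f y‖) x v = ⟪f x, fderiv ℝ f x v⟫ / ‖f x‖ := by
  have hsq : 2 * ‖f x‖ * fderiv ℝ (fun y => ‖f y‖) x v = 2 * ⟪f x, fderiv ℝ f x v⟫ := by
    simpa using DFunLike.congr_fun
      (((hf.norm ℝ hx).hasFDerivAt.pow 2).unique hf.hasFDerivAt.norm_sq) v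
  rw [eq_div_iff (norm_ne_zero_iff.mpr hx)]
  linarith

theorem deriv_norm_eq_inner_div {f : ℝ → F} {t : ℝ} (hf : DifferentiableAt ℝ f t)
    (ht : f t ≠ 0) : deriv (fun τ => ‖f τ‖) t = ⟪f t, deriv f t⟫ / ‖f t‖ := by
  simpa only [fderiv_apply_one_eq_deriv] using fderiv_norm_eq_inner_div hf ht 1

end Norm

theorem differentiableAt_fderiv_of_contDiffAt_two {𝕜 E F : Type*} [NontriviallyNormedField 𝕜]
    [NormedAddCommGroup E] [NormedSpace 𝕜 E] [NormedAddCommGroup F] [NormedSpace 𝕜 F]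
    {f : E → F} {x : E} (hf : ContDiffAt 𝕜 2 f x) : DifferentiableAt 𝕜 (fderiv 𝕜 f) x :=
  (hf.fderiv_right (m := 1) one_add_one_eq_two.le).differentiableAt one_ne_zero

section PartialDerivative

variable {f g : R3 → ℝ} {x : R3}

theorem pd_sub (j : Fin 3) (hf : DifferentiableAt ℝ f x) (hg : DifferentiableAt ℝ g x) :
    pd j (fun y => f y - g y) x = pd j f x - pd j g x := by
  simp [pd, fderiv_fun_sub hf hg]

theorem pd_mul (j : Fin 3) (hf : DifferentiableAt ℝ f x) (hg : DifferentiableAt ℝ g x) :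
    pd j (fun y => f y * g y) x = f x * pd j g x + g x * pd j f x := by
  simp [pd, fderiv_fun_mul hf hg]

theorem differentiableAt_pd (j : Fin 3) (hf : ContDiffAt ℝ 2 f x) :
    DifferentiableAt ℝ (pd j f) x :=
  (differentiableAt_fderiv_of_contDiffAt_two hf).clm_apply (differentiableAt_const _)

theorem pd_pd_eq_fderiv_fderiv (i j : Fin 3) (hf : DifferentiableAt ℝ (fderiv ℝ f) x) :
    pd i (pd j f) x =
      fderiv ℝ (fderiv ℝ f) x (EuclideanSpace.single i 1) (EuclideanSpace.single j 1) := by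
  change fderiv ℝ (fun y => fderiv ℝ f y (EuclideanSpace.single j 1)) x _ = _
  simp [fderiv_clm_apply hf (differentiableAt_const _)]

theorem pd_comm (i j : Fin 3) (hf : ContDiffAt ℝ 2 f x) :
    pd i (pd j f) x = pd j (pd i f) x := by
  have hf' := differentiableAt_fderiv_of_contDiffAt_two hf
  rw [pd_pd_eq_fderiv_fderiv i j hf', pd_pd_eq_fderiv_fderiv j i hf']
  exact hf.isSymmSndFDerivAt (by simp) _ _

theorem sum_mul_pd (f : R3 → ℝ) (x v : R3) : ∑ j, v j * pd j f x = fderiv ℝ f x v := by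
  conv_rhs => rw [← (EuclideanSpace.basisFun (Fin 3) ℝ).sum_repr v]
  simp [pd]

end PartialDerivative

section VectorCalculus

variable {u v F : R3 → R3} {x : R3}

theorem adv_eq_fderiv (u : R3 → R3) (hv : DifferentiableAt ℝ v x) :
    adv u v x = fderiv ℝ v x (u x) := by
  ext i
  have hvi : HasFDerivAt (fun y => v y i) ((EuclideanSpace.proj i).comp (fderiv ℝ v x)) x :=
    (EuclideanSpace.proj i : R3 →L[ℝ] ℝ).hasFDerivAt.comp x hv.hasFDerivAt
  calc adv u v x i = fderiv ℝ (fun y => v y i) x (u x) := sum_mul_pd _ x (u x)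
    _ = fderiv ℝ v x (u x) i := by rw [hvi.fderiv]; rfl

theorem differentiableAt_curl (hF : ContDiffAt ℝ 2 F x) : DifferentiableAt ℝ (curl F) x := by
  have hpd (i j : Fin 3) : DifferentiableAt ℝ (pd j fun y => F y i) x :=
    differentiableAt_pd j (contDiffAt_euclidean.mp hF i)
  refine differentiableAt_euclidean.mpr fun i => ?_
  fin_cases i
  exacts [(hpd 2 1).fun_sub (hpd 1 2), (hpd 0 2).fun_sub (hpd 2 0), (hpd 1 0).fun_sub (hpd 0 1)]

theorem divg_curl (hF : ContDiffAt ℝ 2 F x) : divg (curl F) x = 0 := by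
  have hFi := contDiffAt_euclidean.mp hF
  have hpd (i j : Fin 3) : DifferentiableAt ℝ (pd j fun y => F y i) x :=
    differentiableAt_pd j (hFi i)
  simp only [divg, curl, toR3, WithLp.equiv_symm_apply, Matrix.cons_val]
  rw [pd_sub 0 (hpd 2 1) (hpd 1 2), pd_sub 1 (hpd 0 2) (hpd 2 0), pd_sub 2 (hpd 1 0) (hpd 0 1),
    pd_comm 0 1 (hFi 2), pd_comm 0 2 (hFi 1), pd_comm 1 2 (hFi 0)]
  ring

theorem curl_cross (hu : DifferentiableAt ℝ u x) (hv : DifferentiableAt ℝ v x) :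
    curl (fun y => cross (u y) (v y)) x =
      divg v x • u x - divg u x • v x + adv v u x - adv u v x := by
  have hui := differentiableAt_euclidean.mp hu
  have hvi := differentiableAt_euclidean.mp hv
  have hpd (j a b : Fin 3) : pd j (fun y => u y a * v y b - u y b * v y a) x =
      u x a * pd j (fun y => v y b) x + v x b * pd j (fun y => u y a) x -
        (u x b * pd j (fun y => v y a) x + v x a * pd j (fun y => u y b) x) := by
    rw [pd_sub j ((hui a).fun_mul (hvi b)) ((hui b).fun_mul (hvi a)), pd_mul j (hui a) (hvi b),
      pd_mul j (hui b) (hvi a)]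
  ext i
  fin_cases i <;>
  · simp only [curl, cross, divg, adv, toR3, hpd, Fin.sum_univ_three, WithLp.equiv_symm_apply,
      PiLp.add_apply, PiLp.sub_apply, PiLp.smul_apply, smul_eq_mul, Matrix.cons_val, Fin.zero_eta,
      Fin.mk_one, Fin.reduceFinMk]
    ring

end VectorCalculus

theorem IsEMHDAt.deriv_eq_adv_sub_adv {B : ℝ → R3 → R3} {t : ℝ} {x : R3} (h : IsEMHDAt B t x)
    (hB : ContDiffAt ℝ 2 (B t) x) :
    deriv (fun τ => B τ x) t = adv (curl (B t)) (B t) x - adv (B t) (curl (B t)) x := by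
  have hcurl : curl (fun y => cross (curl (B t) y) (B t y)) x =
      adv (B t) (curl (B t)) x - adv (curl (B t)) (B t) x := by
    rw [curl_cross (differentiableAt_curl hB) (hB.differentiableAt two_ne_zero), divg_curl hB, h.2]
    simp
  rw [eq_neg_of_add_eq_zero_left h.1, hcurl, neg_sub]

theorem norm_B_equation_general {B : ℝ → R3 → R3} {t₀ : ℝ} {x₀ : R3}
    (hBt : DifferentiableAt ℝ (fun t => B t x₀) t₀) (hBx : ContDiffAt ℝ 2 (B t₀) x₀)
    (hB : IsEMHDAt B t₀ x₀) (hne : B t₀ x₀ ≠ 0) :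
    deriv (fun τ => ‖B τ x₀‖) t₀
        - ∑ j, curl (B t₀) x₀ j * pd j (fun x => ‖B t₀ x‖) x₀
      = (-(⟪adv (B t₀) (curl (B t₀)) x₀, B t₀ x₀⟫) / ‖B t₀ x₀‖ ^ 2)
          * ‖B t₀ x₀‖ := by
  have hdiff : DifferentiableAt ℝ (B t₀) x₀ := hBx.differentiableAt two_ne_zero
  have htime : deriv (fun τ => ‖B τ x₀‖) t₀ =
      ⟪B t₀ x₀, adv (curl (B t₀)) (B t₀) x₀ - adv (B t₀) (curl (B t₀)) x₀⟫ / ‖B t₀ x₀‖ := by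
    rw [deriv_norm_eq_inner_div hBt hne, hB.deriv_eq_adv_sub_adv hBx]
  have hspace : ∑ j, curl (B t₀) x₀ j * pd j (fun x => ‖B t₀ x‖) x₀ =
      ⟪B t₀ x₀, adv (curl (B t₀)) (B t₀) x₀⟫ / ‖B t₀ x₀‖ := by
    rw [sum_mul_pd, fderiv_norm_eq_inner_div hdiff hne, adv_eq_fderiv _ hdiff]
  rw [htime, hspace, inner_sub_right, real_inner_comm (B t₀ x₀)]
  field_simp
  ring

/-- equation for |B| along the flow, at a point where B ≠ 0. -/
theorem norm_B_equation (I : Set ℝ) (hI : IsOpen I) (B : ℝ → R3 → R3)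
    (hBt : ∀ x, ContDiffOn ℝ 1 (fun t => B t x) I)
    (hBx : ∀ t ∈ I, ContDiff ℝ 2 (B t))
    (hB : ∀ t ∈ I, ∀ x, IsEMHDAt B t x)
    (t₀ : ℝ) (ht₀ : t₀ ∈ I) (x₀ : R3) (hne : B t₀ x₀ ≠ 0) :
    deriv (fun τ => ‖B τ x₀‖) t₀
        - ∑ j, curl (B t₀) x₀ j * pd j (fun x => ‖B t₀ x‖) x₀
      = (-(⟪adv (B t₀) (fun y => curl (B t₀) y) x₀, B t₀ x₀⟫) / ‖B t₀ x₀‖ ^ 2)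
          * ‖B t₀ x₀‖ :=
  norm_B_equation_general
    (((hBt x₀).differentiableOn one_ne_zero).differentiableAt (hI.mem_nhds ht₀))
    (hBx t₀ ht₀).contDiffAt (hB t₀ ht₀ x₀) hne
end
end

section
/- (Theorem 1.4) Let T > 0 and let λ, μ : (−∞,T) → ℝ be C¹ with λ(t) ≠ 0 and μ(t) ≠ 0 for all t, and suppose it is NOT the case that there exist a₁, a₂ ∈ ℝ with λ(t) = a₁(T−t)^{−2/7} and μ(t) = a₂(T−t)^{−3/7} for all t. Let H : ℝ³ → ℝ³ be C² and suppose B(x,t) := μ(t) H(λ(t)x) is a classical solution of the resistivity-free electron MHD system ∂ₜB + ∇×((∇×B)×B) = 0, ∇·B(·,t) = 0 on ℝ³ × [0,T). Then it is impossible that both (a) esssup_{0<t<T} ‖B(·,t)‖_{L²(ℝ³)} < ∞ and (b) ∫₀ᵗ ‖∇²B(·,τ)‖_{L^∞(ℝ³)} dτ → ∞ as t → T⁻ hold. -/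
noncomputable section

open MeasureTheory Real Set
open scoped RealInnerProductSpace

/-!
If `B(x, t) = μ(t) H(λ(t) x)` and `(λ', μ') ≠ 0` at some time, dividing the evolution equation at
that time by `μ² λ²` gives a profile equation `p H + q (y · ∇) H + ∇ × ((∇ × H) × H) = 0` with
`(p, q) ≠ 0`. Its local energy identity `div J = -(p - 3q/2) ‖H‖²` has a flux
`J = (q/2) ‖H‖² y + ((∇ × H) × H) × H`. If one Hessian is bounded then, together with `H ∈ L²`, so
is `∇ × H`, hence `J = O((1 + ‖y‖) ‖H‖²)` and integration over space gives `H = 0` or `p = 3q/2`.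
In the second case `J` is divergence-free, and `q J` points outwards wherever
`2 ‖∇ × H‖ < |q| ‖y‖`, so `H` vanishes off the smallest ball outside which this inequality holds;
continuity of `∇ × H` on its boundary forces the radius to be `0`. So `B` is constant in time, and
the integral of its Hessian norm cannot blow up in finite time.
-/

section VectorCalculus

variable {F G : R3 → R3} {x : R3}

@[simp]
lemma toR3_apply (v : Fin 3 → ℝ) (i : Fin 3) : toR3 v i = v i := rfl

lemma pd_component (hF : DifferentiableAt ℝ F x) (i j : Fin 3) :
    pd j (fun y => F y i) x = fderiv ℝ F x (EuclideanSpace.single j 1) i := by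
  have h : HasFDerivAt (fun y => F y i) ((EuclideanSpace.proj i).comp (fderiv ℝ F x)) x :=
    (EuclideanSpace.proj (𝕜 := ℝ) i).hasFDerivAt.comp x hF.hasFDerivAt
  rw [pd, h.fderiv]
  rfl

/-- The curl as a linear function of the Jacobian. -/
def curlCLM : (R3 →L[ℝ] R3) →L[ℝ] R3 :=
  LinearMap.toContinuousLinearMap
    { toFun := fun A =>
        toR3 ![A (EuclideanSpace.single 1 1) 2 - A (EuclideanSpace.single 2 1) 1,
               A (EuclideanSpace.single 2 1) 0 - A (EuclideanSpace.single 0 1) 2,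
               A (EuclideanSpace.single 0 1) 1 - A (EuclideanSpace.single 1 1) 0]
      map_add' := fun A B => by ext i; fin_cases i <;> simp <;> ring
      map_smul' := fun c A => by ext i; fin_cases i <;> simp <;> ring }

lemma curl_eq_curlCLM (hF : DifferentiableAt ℝ F x) : curl F x = curlCLM (fderiv ℝ F x) := by
  simp only [curl, pd_component hF]
  rfl

lemma norm_curl_le (hF : DifferentiableAt ℝ F x) : ‖curl F x‖ ≤ ‖curlCLM‖ * ‖fderiv ℝ F x‖ :=
  curl_eq_curlCLM hF ▸ curlCLM.le_opNorm _

lemma contDiff_curl {n : WithTop ℕ∞} (hF : ContDiff ℝ (n + 1) F) : ContDiff ℝ n (curl F) := by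
  have h : curl F = fun y => curlCLM (fderiv ℝ F y) :=
    funext fun y => curl_eq_curlCLM (hF.differentiable (by simp) y)
  exact h ▸ curlCLM.contDiff.comp (hF.fderiv_right le_rfl)

/-- The cross product of ℝ³ as a continuous bilinear map. -/
def crossCLM : R3 →L[ℝ] R3 →L[ℝ] R3 :=
  (LinearMap.mk₂ ℝ cross
    (fun u u' v => by ext i; fin_cases i <;> simp [cross] <;> ring)
    (fun c u v => by ext i; fin_cases i <;> simp [cross] <;> ring)
    (fun u v v' => by ext i; fin_cases i <;> simp [cross] <;> ring)
    (fun c u v => by ext i; fin_cases i <;> simp [cross] <;> ring)).toContinuousBilinearMap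

lemma crossCLM_apply (u v : R3) : crossCLM u v = cross u v := rfl

lemma cross_smul_smul (a b : ℝ) (u v : R3) : cross (a • u) (b • v) = (a * b) • cross u v := by
  simp only [← crossCLM_apply, map_smul, smul_apply, smul_smul, mul_comm]

lemma norm_cross_le (u v : R3) : ‖cross u v‖ ≤ ‖u‖ * ‖v‖ := by
  have h : cross u v = WithLp.toLp 2 (crossProduct u.ofLp v.ofLp) := rfl
  rw [h, InnerProductGeometry.norm_ofLp_crossProduct]
  exact mul_le_of_le_one_right (by positivity) (sin_le_one _)

lemma norm_cross_cross_le (u v : R3) : ‖cross (cross u v) v‖ ≤ ‖u‖ * ‖v‖ ^ 2 :=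
  calc ‖cross (cross u v) v‖
      ≤ ‖cross u v‖ * ‖v‖ := norm_cross_le _ _
    _ ≤ ‖u‖ * ‖v‖ * ‖v‖ := by
        gcongr
        exact norm_cross_le u v
    _ = ‖u‖ * ‖v‖ ^ 2 := by ring

lemma inner_cross_self_left (u v : R3) : ⟪cross u v, u⟫ = 0 := by
  simp only [cross, PiLp.inner_apply, Fin.sum_univ_three, toR3_apply, Matrix.cons_val,
    RCLike.inner_apply, conj_trivial]
  ring

lemma contDiff_cross {n : WithTop ℕ∞} (hF : ContDiff ℝ n F) (hG : ContDiff ℝ n G) :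
    ContDiff ℝ n (fun y => cross (F y) (G y)) :=
  (crossCLM.contDiff.comp hF).clm_apply hG

lemma divg_eq_sum (hF : DifferentiableAt ℝ F x) :
    divg F x = ∑ i, fderiv ℝ F x (EuclideanSpace.single i 1) i := by
  simp only [divg, pd_component hF, Fin.sum_univ_three]

lemma sum_mul_apply_single {ι : Type*} [Fintype ι] [DecidableEq ι]
    (L : EuclideanSpace ℝ ι →L[ℝ] ℝ) (v : EuclideanSpace ℝ ι) :
    ∑ i, L (EuclideanSpace.single i 1) * v i = L v := by
  conv_rhs => rw [← (EuclideanSpace.basisFun ι ℝ).sum_repr v]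
  simp [mul_comm]

lemma divg_add (hF : DifferentiableAt ℝ F x) (hG : DifferentiableAt ℝ G x) :
    divg (fun y => F y + G y) x = divg F x + divg G x := by
  rw [divg_eq_sum (hF.fun_add hG), divg_eq_sum hF, divg_eq_sum hG, fderiv_fun_add hF hG,
    ← Finset.sum_add_distrib]
  rfl

lemma divg_smul {f : R3 → ℝ} (hf : DifferentiableAt ℝ f x) (hF : DifferentiableAt ℝ F x) :
    divg (fun y => f y • F y) x = f x * divg F x + fderiv ℝ f x (F x) := by
  rw [divg_eq_sum (hf.fun_smul hF), divg_eq_sum hF, fderiv_fun_smul hf hF,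
    ← sum_mul_apply_single (fderiv ℝ f x), Finset.mul_sum, ← Finset.sum_add_distrib]
  rfl

lemma divg_id : divg (fun y => y) x = 3 := by
  simp [divg_eq_sum (F := fun y => y) differentiableAt_id]

lemma divg_cross (hF : DifferentiableAt ℝ F x) (hG : DifferentiableAt ℝ G x) :
    divg (fun y => cross (F y) (G y)) x = ⟪G x, curl F x⟫ - ⟪F x, curl G x⟫ := by
  have hFG : HasFDerivAt (fun y => cross (F y) (G y)) _ x :=
    crossCLM.hasFDerivAt_of_bilinear hF.hasFDerivAt hG.hasFDerivAt
  rw [divg_eq_sum hFG.differentiableAt, hFG.fderiv]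
  simp only [curl, pd_component hF, pd_component hG, PiLp.inner_apply, Fin.sum_univ_three,
    add_apply, ContinuousLinearMap.precompR_apply, ContinuousLinearMap.precompL_apply,
    ContinuousLinearMap.compL_apply, ContinuousLinearMap.comp_apply, crossCLM_apply, cross,
    toR3_apply, PiLp.add_apply, Matrix.cons_val, RCLike.inner_apply, conj_trivial]
  ring

lemma curl_const_smul_comp_smul (m l : ℝ) (hF : DifferentiableAt ℝ F (l • x)) :
    curl (fun y => m • F (l • y)) x = (m * l) • curl F (l • x) := by
  have h : DifferentiableAt ℝ (fun y => F (l • y)) x :=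
    hF.comp x (differentiableAt_id.const_smul l)
  rw [curl_eq_curlCLM (h.fun_const_smul m), curl_eq_curlCLM hF, fderiv_fun_const_smul h,
    fderiv_comp_smul, smul_smul, map_smul]

end VectorCalculus

section DivergenceTheorem

lemma integral_mul_divg {χ : R3 → ℝ} {V : R3 → R3} (hχ : ContDiff ℝ 1 χ)
    (hχs : HasCompactSupport χ) (hV : ContDiff ℝ 1 V) :
    ∫ y, χ y * divg V y = -∫ y, fderiv ℝ χ y (V y) := by
  have hVi (i : Fin 3) : ContDiff ℝ 1 (fun y => V y i) :=
    (EuclideanSpace.proj (𝕜 := ℝ) i).contDiff.comp hV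
  have hpd (i : Fin 3) : Continuous (fun y => pd i (fun z => V z i) y) :=
    ((hVi i).continuous_fderiv one_ne_zero).clm_apply continuous_const
  have hχ' (i : Fin 3) : Continuous (fun y => fderiv ℝ χ y (EuclideanSpace.single i 1)) :=
    (hχ.continuous_fderiv one_ne_zero).clm_apply continuous_const
  have hint (i : Fin 3) : Integrable (fun y => χ y * pd i (fun z => V z i) y) :=
    (hχ.continuous.mul (hpd i)).integrable_of_hasCompactSupport hχs.mul_right
  have hint' (i : Fin 3) :
      Integrable (fun y => fderiv ℝ χ y (EuclideanSpace.single i 1) * V y i) :=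
    ((hχ' i).mul (hVi i).continuous).integrable_of_hasCompactSupport
      ((hχs.fderiv_apply ℝ _).mul_right)
  calc ∫ y, χ y * divg V y
      = ∫ y, ∑ i, χ y * pd i (fun z => V z i) y := by
        simp only [divg, Fin.sum_univ_three, mul_add]
    _ = ∑ i, ∫ y, χ y * pd i (fun z => V z i) y := integral_finsetSum _ fun i _ => hint i
    _ = ∑ i, -∫ y, fderiv ℝ χ y (EuclideanSpace.single i 1) * V y i :=
        Finset.sum_congr rfl fun i _ =>
          integral_mul_fderiv_eq_neg_fderiv_mul_of_integrable (hint' i) (hint i)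
            ((hχ.continuous.mul (hVi i).continuous).integrable_of_hasCompactSupport hχs.mul_right)
            (fun y _ => hχ.differentiable one_ne_zero y)
            (fun y _ => (hVi i).differentiable one_ne_zero y)
    _ = -∫ y, fderiv ℝ χ y (V y) := by
        rw [Finset.sum_neg_distrib, ← integral_finsetSum _ fun i _ => hint' i]
        simp only [sum_mul_apply_single]

section Cutoff

variable {E : Type*} [NormedAddCommGroup E] [NormedSpace ℝ E] [MeasurableSpace E] [BorelSpace E]
  {μ : Measure E}

lemma tendsto_integral_comp_smul_mul {χ f : E → ℝ} (hχ : Continuous χ) (hχ0 : χ 0 = 1) {C : ℝ}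
    (hC : ∀ y, ‖χ y‖ ≤ C) (hf : Integrable f μ) :
    Filter.Tendsto (fun ε : ℝ => ∫ y, χ (ε • y) * f y ∂μ) (nhds 0) (nhds (∫ y, f y ∂μ)) := by
  refine tendsto_integral_filter_of_dominated_convergence (fun y => C * ‖f y‖)
    (.of_forall fun ε => ?_) (.of_forall fun ε => .of_forall fun y => ?_) (hf.norm.const_mul C)
    (.of_forall fun y => ?_)
  · exact (hχ.comp (continuous_const_smul ε)).aestronglyMeasurable.mul hf.aestronglyMeasurable
  · rw [norm_mul]
    gcongr
    exact hC _
  · have h : Continuous (fun ε : ℝ => χ (ε • y) * f y) := by fun_prop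
    simpa only [zero_smul, hχ0, one_mul] using h.tendsto 0

/-- The commutator `ε L (ε y)` of a cutoff at scale `1 / ε` is `O(1 / (1 + ‖y‖))` uniformly in
`ε ≤ 1`, which offsets the linear weight in the bound on `V`. -/
lemma tendsto_integral_mul_comp_smul_apply [SecondCountableTopology E] {F : Type*}
    [NormedAddCommGroup F] [NormedSpace ℝ F] {L : E → F →L[ℝ] ℝ} (hL : Continuous L) {C : ℝ}
    (hC : ∀ z, (1 + ‖z‖) * ‖L z‖ ≤ C) {V : E → F} (hV : Continuous V) {g : E → ℝ}
    (hg : Integrable g μ) (hVg : ∀ y, ‖V y‖ ≤ (1 + ‖y‖) * g y) :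
    Filter.Tendsto (fun ε : ℝ => ∫ y, ε * L (ε • y) (V y) ∂μ) (nhdsWithin 0 (Ioi 0))
      (nhds 0) := by
  suffices h : Filter.Tendsto (fun ε : ℝ => ∫ y, ε * L (ε • y) (V y) ∂μ) (nhdsWithin 0 (Ioi 0))
      (nhds (∫ _, 0 ∂μ)) by rwa [integral_zero] at h
  refine tendsto_integral_filter_of_dominated_convergence (fun y => C * g y)
    (.of_forall fun ε => Continuous.aestronglyMeasurable (by fun_prop)) ?_ (hg.const_mul C)
    (.of_forall fun y => ?_)
  · filter_upwards [Ioo_mem_nhdsGT one_pos] with ε hε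
    refine .of_forall fun y => ?_
    have hg0 : 0 ≤ g y :=
      nonneg_of_mul_nonneg_right ((norm_nonneg _).trans (hVg y)) (by positivity)
    calc ‖ε * L (ε • y) (V y)‖
        ≤ ε * (‖L (ε • y)‖ * ((1 + ‖y‖) * g y)) := by
          rw [norm_mul, norm_of_nonneg hε.1.le]
          gcongr
          · exact hε.1.le
          · exact (L (ε • y)).le_opNorm_of_le (hVg y)
      _ = (ε + ‖ε • y‖) * ‖L (ε • y)‖ * g y := by
          rw [norm_smul, norm_of_nonneg hε.1.le]
          ring
      _ ≤ (1 + ‖ε • y‖) * ‖L (ε • y)‖ * g y := by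
          gcongr
          exact hε.2.le
      _ ≤ C * g y := by
          gcongr
          exact hC _
  · have h : Continuous (fun ε : ℝ => ε * L (ε • y) (V y)) := by fun_prop
    simpa only [zero_mul] using (h.tendsto 0).mono_left nhdsWithin_le_nhds

end Cutoff

lemma integral_divg_eq_zero {V : R3 → R3} (hV : ContDiff ℝ 1 V) {g : R3 → ℝ} (hg : Integrable g)
    (hVg : ∀ y, ‖V y‖ ≤ (1 + ‖y‖) * g y) (hdiv : Integrable (divg V)) :
    ∫ y, divg V y = 0 := by
  let χ : ContDiffBump (0 : R3) := ⟨1, 2, one_pos, one_lt_two⟩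
  have hχ : ContDiff ℝ 1 χ := χ.contDiff
  have hχ0 : χ 0 = 1 := χ.one_of_mem_closedBall (Metric.mem_closedBall_self zero_le_one)
  have hdχ : Continuous (fderiv ℝ χ) := hχ.continuous_fderiv one_ne_zero
  obtain ⟨C, hC⟩ : ∃ C, ∀ z, ‖(1 + ‖z‖) * ‖fderiv ℝ χ z‖‖ ≤ C :=
    (χ.hasCompactSupport.fderiv ℝ).norm.mul_left.exists_bound_of_continuous (by fun_prop)
  have hparts : ∀ᶠ ε : ℝ in nhdsWithin 0 (Ioi 0),
      -∫ y, ε * fderiv ℝ χ (ε • y) (V y) = ∫ y, χ (ε • y) * divg V y := by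
    filter_upwards [self_mem_nhdsWithin] with ε hε
    rw [integral_mul_divg (χ := fun y => χ (ε • y)) (hχ.comp (contDiff_const_smul _))
      (χ.hasCompactSupport.comp_smul (ne_of_gt hε)) hV]
    simp only [fderiv_comp_smul, smul_apply, smul_eq_mul]
  have hcomm := (tendsto_integral_mul_comp_smul_apply hdχ (fun z => (le_abs_self _).trans (hC z))
    hV.continuous hg hVg).neg
  have hmain := (tendsto_integral_comp_smul_mul hχ.continuous hχ0
    (fun y => (norm_of_nonneg χ.nonneg).trans_le χ.le_one) hdiv).mono_left
      (nhdsWithin_le_nhds (s := Ioi 0))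
  exact tendsto_nhds_unique hmain (by simpa only [neg_zero] using hcomm.congr' hparts)

lemma hasCompactSupport_comp_norm_sq {E M : Type*} [NormedAddCommGroup E] [ProperSpace E]
    [Zero M] {f : ℝ → M} {b : ℝ} (hf : ∀ s, b ≤ s → f s = 0) :
    HasCompactSupport (fun y : E => f (‖y‖ ^ 2)) :=
  .intro (isCompact_closedBall (0 : E) √b) fun y hy =>
    hf _ (Real.lt_sq_of_sqrt_lt (by simpa using hy)).le

lemma integral_radial_mul_inner_eq_zero {V : R3 → R3} (hV : ContDiff ℝ 1 V)
    (hdiv : ∀ y, divg V y = 0) {ψ : ℝ → ℝ} (hψ : Continuous ψ) {b : ℝ}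
    (hψb : ∀ s, b ≤ s → ψ s = 0) : ∫ y, ψ (‖y‖ ^ 2) * ⟪y, V y⟫ = 0 := by
  let φ : ℝ → ℝ := fun s => ∫ u in b..s, ψ u
  have hφ (s : ℝ) : HasDerivAt φ (ψ s) s := hψ.integral_hasStrictDerivAt b s |>.hasDerivAt
  have hφb (s : ℝ) (hs : b ≤ s) : φ s = 0 :=
    intervalIntegral.integral_zero_ae <| .of_forall fun u hu =>
      hψb u (uIoc_of_le hs ▸ hu).1.le
  have hφC : ContDiff ℝ 1 φ := contDiff_one_iff_deriv.2
    ⟨fun s => (hφ s).differentiableAt, (funext fun s => (hφ s).deriv : deriv φ = ψ) ▸ hψ⟩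
  have hsupp : HasCompactSupport (fun y : R3 => φ (‖y‖ ^ 2)) :=
    hasCompactSupport_comp_norm_sq hφb
  have hfderiv (y : R3) :
      fderiv ℝ (fun z : R3 => φ (‖z‖ ^ 2)) y (V y) = 2 * (ψ (‖y‖ ^ 2) * ⟪y, V y⟫) := by
    have h : HasFDerivAt (fun z : R3 => φ (‖z‖ ^ 2)) _ y :=
      (hφ _).comp_hasFDerivAt y (hasStrictFDerivAt_norm_sq y).hasFDerivAt
    rw [h.fderiv]
    simp only [smul_apply, innerSL_apply_apply, smul_eq_mul, nsmul_eq_mul, Nat.cast_ofNat]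
    ring
  have h := integral_mul_divg (hφC.comp (contDiff_norm_sq ℝ)) hsupp hV
  simp only [Function.comp_def, hdiv, mul_zero, integral_zero, hfderiv, integral_const_mul] at h
  linarith

lemma inner_eq_zero_of_divg_eq_zero {V : R3 → R3} (hV : ContDiff ℝ 1 V)
    (hdiv : ∀ y, divg V y = 0) {r : ℝ} (hr : 0 ≤ r) (hpos : ∀ y, r < ‖y‖ → 0 ≤ ⟪y, V y⟫)
    {y : R3} (hy : r < ‖y‖) : ⟪y, V y⟫ = 0 := by
  by_contra hne
  let ψ : ℝ → ℝ := fun s => max 0 (s - r ^ 2) * max 0 (‖y‖ ^ 2 + 1 - s)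
  have hψ : Continuous ψ := by fun_prop
  have hψb (s : ℝ) (hs : ‖y‖ ^ 2 + 1 ≤ s) : ψ s = 0 := by
    simp [ψ, max_eq_left (sub_nonpos.2 hs)]
  have hcont : Continuous (fun z : R3 => ψ (‖z‖ ^ 2) * ⟪z, V z⟫) := by
    have := hV.continuous
    fun_prop
  have hnonneg (z : R3) : 0 ≤ ψ (‖z‖ ^ 2) * ⟪z, V z⟫ := by
    rcases lt_or_ge r ‖z‖ with hz | hz
    · exact mul_nonneg (by positivity) (hpos z hz)
    · simp [ψ, max_eq_left (sub_nonpos.2 (pow_le_pow_left₀ (norm_nonneg z) hz 2))]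
  have hψy : 0 < ψ (‖y‖ ^ 2) := by
    have : r ^ 2 < ‖y‖ ^ 2 := by gcongr
    exact mul_pos (lt_max_of_lt_right (by linarith)) (lt_max_of_lt_right (by linarith))
  exact (hcont.integral_pos_of_hasCompactSupport_nonneg_nonzero
    (hasCompactSupport_comp_norm_sq hψb).mul_right hnonneg
    (mul_ne_zero hψy.ne' hne)).ne' (integral_radial_mul_inner_eq_zero hV hdiv hψ hψb)

end DivergenceTheorem

section LpEstimates

variable {E F : Type*} [NormedAddCommGroup E] [NormedSpace ℝ E] [NormedAddCommGroup F]
  [NormedSpace ℝ F]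

lemma norm_fderiv_apply_le {G : E → F} (hG : Differentiable ℝ G) {M : NNReal}
    (hM : LipschitzWith M (fderiv ℝ G)) {x z e : E} (hz : z ∈ Metric.closedBall x 1)
    (he : ‖e‖ ≤ 1) : ‖fderiv ℝ G x e‖ ≤ ‖G (z + e)‖ + ‖G z‖ + 2 * M := by
  have hball : Metric.closedBall z 1 ⊆ Metric.closedBall x 2 :=
    Metric.closedBall_subset_closedBall' (by linarith [Metric.mem_closedBall.1 hz])
  have hze : z + e ∈ Metric.closedBall z 1 := by simpa using he
  have herr : ‖G (z + e) - G z - fderiv ℝ G x (z + e - z)‖ ≤ M * 2 * ‖z + e - z‖ := by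
    refine (convex_closedBall x 2).norm_image_sub_le_of_norm_fderiv_le' (fun w _ => hG w)
      (fun w hw => ?_) (hball (Metric.mem_closedBall_self zero_le_one)) (hball hze)
    rw [← dist_eq_norm]
    exact (hM.dist_le_mul w x).trans (by gcongr; exact hw)
  rw [add_sub_cancel_left] at herr
  calc ‖fderiv ℝ G x e‖
      = ‖G (z + e) - G z - (G (z + e) - G z - fderiv ℝ G x e)‖ := by rw [sub_sub_cancel]
    _ ≤ ‖G (z + e)‖ + ‖G z‖ + M * 2 * ‖e‖ :=
        (norm_sub_le _ _).trans (add_le_add (norm_sub_le _ _) herr)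
    _ ≤ ‖G (z + e)‖ + ‖G z‖ + 2 * M := by
        rw [mul_comm (M : ℝ)]
        exact add_le_add_right (mul_le_of_le_one_right (by positivity) he) _

lemma lipschitzWith_fderiv_of_norm_iteratedFDeriv_two_le {G : E → F} (hG : ContDiff ℝ 2 G)
    {M : NNReal} (hM : ∀ x, ‖iteratedFDeriv ℝ 2 G x‖ ≤ M) : LipschitzWith M (fderiv ℝ G) := by
  refine lipschitzWith_of_nnnorm_fderiv_le
    ((hG.fderiv_right (m := 1) le_rfl).differentiable one_ne_zero) fun x => ?_
  rw [← NNReal.coe_le_coe, coe_nnnorm, ← norm_iteratedFDeriv_one, norm_iteratedFDeriv_fderiv]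
  exact hM x

variable [MeasurableSpace E] [BorelSpace E] [FiniteDimensional ℝ E] {μ : Measure E}
  [μ.IsAddHaarMeasure]

lemma exists_mem_closedBall_le_integral_div {f : E → ℝ} (hf : Integrable f μ) (hf0 : 0 ≤ f)
    (x : E) : ∃ z ∈ Metric.closedBall x 1,
      f z ≤ (∫ y, f y ∂μ) / μ.real (Metric.closedBall 0 1) := by
  have hμ : μ (Metric.closedBall x 1) = μ (Metric.closedBall 0 1) :=
    Measure.addHaar_closedBall_center μ x 1
  obtain ⟨z, hz, hfz⟩ := exists_le_setAverage (μ := μ)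
    (Metric.measure_closedBall_pos μ x one_pos).ne' measure_closedBall_lt_top.ne hf.integrableOn
  refine ⟨z, hz, hfz.trans ?_⟩
  rw [setAverage_eq, smul_eq_mul, measureReal_def, hμ, ← measureReal_def, inv_mul_eq_div]
  exact div_le_div_of_nonneg_right (setIntegral_le_integral hf (.of_forall hf0)) (by positivity)

lemma exists_norm_fderiv_le_of_memLp {G : E → F} (hG : Differentiable ℝ G) {M : NNReal}
    (hM : LipschitzWith M (fderiv ℝ G)) {p : ENNReal} (hp0 : p ≠ 0) (hp : p ≠ ⊤)
    (hLp : MemLp G p μ) : ∃ K, ∀ x, ‖fderiv ℝ G x‖ ≤ K := by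
  let r := p.toReal
  have hr : 0 < r := ENNReal.toReal_pos hp0 hp
  have hint : Integrable (fun y => ‖G y‖ ^ r) μ := hLp.integrable_norm_rpow hp0 hp
  let c := 2 * (∫ y, ‖G y‖ ^ r ∂μ) / μ.real (Metric.closedBall 0 1)
  have hc : 0 ≤ c := by positivity
  refine ⟨2 * c ^ r⁻¹ + 2 * M, fun x =>
    ContinuousLinearMap.opNorm_le_of_unit_norm (by positivity) fun e he => ?_⟩
  obtain ⟨z, hz, hGz⟩ := exists_mem_closedBall_le_integral_div
    ((hint.comp_add_right e).add hint) (fun y => add_nonneg (by positivity) (by positivity)) x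
  simp only [Pi.add_apply] at hGz
  rw [integral_add (hint.comp_add_right e) hint, integral_add_right_eq_self (fun y => ‖G y‖ ^ r),
    ← two_mul] at hGz
  have hbound (w : E) (hw : ‖G w‖ ^ r ≤ c) : ‖G w‖ ≤ c ^ r⁻¹ :=
    (Real.le_rpow_inv_iff_of_pos (norm_nonneg _) hc hr).2 hw
  have hGze := hbound (z + e) ((le_add_of_nonneg_right (by positivity)).trans hGz)
  have hGz' := hbound z ((le_add_of_nonneg_left (by positivity)).trans hGz)
  linarith [norm_fderiv_apply_le hG hM hz he.le]

lemma memLp_comp_smul {V : Type*} [NormedAddCommGroup V] {G : E → V} {p : ENNReal} {l : ℝ}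
    (hl : l ≠ 0) (hG : MemLp G p μ) : MemLp (fun x => G (l • x)) p μ := by
  refine MemLp.comp_of_map ?_ (measurable_const_smul l).aemeasurable
  rw [Measure.map_addHaar_smul μ hl]
  exact hG.smul_measure ENNReal.ofReal_ne_top

end LpEstimates

section Profile

variable {H : R3 → R3} {p q : ℝ} {y : R3}

/-- The Hall term `∇ × ((∇ × F) × F)` of the electron MHD equation. -/
def hallTerm (F : R3 → R3) (x : R3) : R3 :=
  curl (fun y => cross (curl F y) (F y)) x

lemma contDiff_cross_curl_self {n : WithTop ℕ∞} (hH : ContDiff ℝ (n + 1) H) :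
    ContDiff ℝ n (fun y => cross (curl H y) (H y)) :=
  contDiff_cross (contDiff_curl hH) (hH.of_le le_self_add)

lemma hallTerm_const_smul_comp_smul (hH : ContDiff ℝ 2 H) (m l : ℝ) (x : R3) :
    hallTerm (fun y => m • H (l • y)) x = (m ^ 2 * l ^ 2) • hallTerm H (l • x) := by
  have hcross : (fun y => cross (curl (fun z => m • H (l • z)) y) (m • H (l • y))) =
      fun y => (m ^ 2 * l) • cross (curl H (l • y)) (H (l • y)) := by
    funext y
    rw [curl_const_smul_comp_smul m l (hH.differentiable two_ne_zero _), cross_smul_smul]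
    ring_nf
  have hdiff : Differentiable ℝ (fun y => cross (curl H y) (H y)) :=
    (contDiff_cross_curl_self (n := 1) hH).differentiable one_ne_zero
  rw [hallTerm, hcross, curl_const_smul_comp_smul (F := fun y => cross (curl H y) (H y)) _ _
    (hdiff _), hallTerm]
  ring_nf

/-- The stationary profile equation `p H + q (y · ∇) H + ∇ × ((∇ × H) × H) = 0` solved by the
profile of a pseudo-self-similar solution, with the Hall term normalized to coefficient `1`. -/
def IsProfile (p q : ℝ) (H : R3 → R3) : Prop :=
  ∀ y, p • H y + q • fderiv ℝ H y y + hallTerm H y = 0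

/-- The flux of the magnetic energy `‖H‖² / 2` under the profile equation: transport by the
dilation field `q y` plus the Poynting-type flux `((∇ × H) × H) × H` of the Hall term. -/
def energyFlux (q : ℝ) (H : R3 → R3) (y : R3) : R3 :=
  (q / 2 * ‖H y‖ ^ 2) • y + cross (cross (curl H y) (H y)) (H y)

lemma contDiff_energyFlux {n : WithTop ℕ∞} (hH : ContDiff ℝ (n + 1) H) :
    ContDiff ℝ n (energyFlux q H) := by
  have hH' : ContDiff ℝ n H := hH.of_le le_self_add
  exact ((contDiff_const.mul (hH'.norm_sq ℝ)).smul contDiff_id).add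
    (contDiff_cross (contDiff_cross_curl_self hH) hH')

lemma divg_energyFlux (hH : ContDiff ℝ 2 H) :
    divg (energyFlux q H) y =
      3 * q / 2 * ‖H y‖ ^ 2 + ⟪H y, q • fderiv ℝ H y y + hallTerm H y⟫ := by
  have hHd : DifferentiableAt ℝ H y := hH.differentiable two_ne_zero y
  have hn : HasFDerivAt (fun z => q / 2 * ‖H z‖ ^ 2) _ y :=
    hHd.hasFDerivAt.norm_sq.const_mul (q / 2)
  have hdiff : DifferentiableAt ℝ (fun z => cross (curl H z) (H z)) y :=
    (contDiff_cross_curl_self (n := 1) hH).differentiable one_ne_zero y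
  have hc : DifferentiableAt ℝ (fun z => cross (cross (curl H z) (H z)) (H z)) y :=
    (contDiff_cross (contDiff_cross_curl_self (n := 1) hH) (hH.of_le one_le_two)).differentiable
      one_ne_zero y
  have horth : ⟪cross (curl H y) (H y), curl H y⟫ = 0 := inner_cross_self_left _ _
  unfold energyFlux
  rw [divg_add (hn.differentiableAt.fun_smul differentiableAt_fun_id) hc,
    divg_smul hn.differentiableAt differentiableAt_fun_id, divg_id, divg_cross hdiff hHd, horth,
    hn.fderiv, inner_add_right, inner_smul_right, hallTerm]
  simp only [smul_apply, ContinuousLinearMap.comp_apply, innerSL_apply_apply, smul_eq_mul]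
  ring

lemma IsProfile.divg_energyFlux_eq (h : IsProfile p q H) (hH : ContDiff ℝ 2 H) :
    divg (energyFlux q H) y = -((p - 3 * q / 2) * ‖H y‖ ^ 2) := by
  have hy : q • fderiv ℝ H y y + hallTerm H y = -(p • H y) := by
    rw [eq_neg_iff_add_eq_zero, add_comm, ← add_assoc, h y]
  rw [divg_energyFlux hH, hy, inner_neg_right, inner_smul_right, real_inner_self_eq_norm_sq]
  ring

lemma norm_energyFlux_le :
    ‖energyFlux q H y‖ ≤ (|q| / 2 * ‖y‖ + ‖curl H y‖) * ‖H y‖ ^ 2 :=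
  calc ‖energyFlux q H y‖
      ≤ ‖(q / 2 * ‖H y‖ ^ 2) • y‖ + ‖cross (cross (curl H y) (H y)) (H y)‖ := norm_add_le _ _
    _ ≤ |q| / 2 * ‖H y‖ ^ 2 * ‖y‖ + ‖curl H y‖ * ‖H y‖ ^ 2 := by
        gcongr
        · simp [norm_smul]
        · exact norm_cross_cross_le _ _
    _ = (|q| / 2 * ‖y‖ + ‖curl H y‖) * ‖H y‖ ^ 2 := by ring

lemma le_inner_smul_energyFlux :
    |q| * ‖y‖ * (|q| * ‖y‖ / 2 - ‖curl H y‖) * ‖H y‖ ^ 2 ≤ ⟪y, q • energyFlux q H y⟫ := by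
  let w := cross (cross (curl H y) (H y)) (H y)
  have hw : |q * ⟪y, w⟫| ≤ |q| * (‖y‖ * (‖curl H y‖ * ‖H y‖ ^ 2)) := by
    rw [abs_mul]
    gcongr
    exact (abs_real_inner_le_norm y w).trans (by gcongr; exact norm_cross_cross_le _ _)
  have hinner : ⟪y, q • energyFlux q H y⟫ = |q| ^ 2 / 2 * ‖y‖ ^ 2 * ‖H y‖ ^ 2 + q * ⟪y, w⟫ := by
    rw [inner_smul_right, energyFlux, inner_add_right, inner_smul_right,
      real_inner_self_eq_norm_sq, sq_abs]
    ring
  rw [hinner]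
  linarith [neg_abs_le (q * ⟪y, w⟫)]

lemma IsProfile.coeff_eq_or_eq_zero (h : IsProfile p q H) (hH : ContDiff ℝ 2 H)
    (hL2 : MemLp H 2) {K : ℝ} (hK : ∀ y, ‖curl H y‖ ≤ K) : p = 3 * q / 2 ∨ H = 0 := by
  have hint : Integrable (fun y => ‖H y‖ ^ 2) := hL2.integrable_norm_pow two_ne_zero
  have hdiv : divg (energyFlux q H) = fun y => -((p - 3 * q / 2) * ‖H y‖ ^ 2) :=
    funext fun y => h.divg_energyFlux_eq hH
  have hbound (y : R3) : ‖energyFlux q H y‖ ≤ (1 + ‖y‖) * ((|q| / 2 + K) * ‖H y‖ ^ 2) :=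
    calc ‖energyFlux q H y‖
        ≤ (|q| / 2 * ‖y‖ + ‖curl H y‖) * ‖H y‖ ^ 2 := norm_energyFlux_le
      _ ≤ ((1 + ‖y‖) * (|q| / 2 + K)) * ‖H y‖ ^ 2 := by
          gcongr
          nlinarith [hK y, norm_nonneg (curl H y), norm_nonneg y, abs_nonneg q]
      _ = _ := by ring
  have hzero : ∫ y, divg (energyFlux q H) y = 0 :=
    integral_divg_eq_zero (contDiff_energyFlux (n := 1) hH) (hint.const_mul _) hbound
      (hdiv ▸ (hint.const_mul _).neg)
  rw [hdiv, integral_neg, neg_eq_zero, integral_const_mul, mul_eq_zero, sub_eq_zero,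
    integral_eq_zero_iff_of_nonneg (fun y => by positivity) hint] at hzero
  refine hzero.imp_right fun h0 => ?_
  have hae := (Continuous.ae_eq_iff_eq volume (by have := hH.continuous; fun_prop)
    continuous_zero).1 h0
  exact funext fun y => by simpa using congrFun hae y

/-- The flux is divergence-free and points outwards (up to the sign of `q`) off the ball. -/
lemma IsProfile.eq_zero_of_lt_norm (h : IsProfile (3 * q / 2) q H) (hH : ContDiff ℝ 2 H) {r : ℝ}
    (hr : 0 ≤ r) (hcurl : ∀ y, r < ‖y‖ → 2 * ‖curl H y‖ < |q| * ‖y‖) (hy : r < ‖y‖) : H y = 0 := by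
  have hlower (z : R3) (hz : r < ‖z‖) :
      0 ≤ |q| * ‖z‖ * (|q| * ‖z‖ / 2 - ‖curl H z‖) * ‖H z‖ ^ 2 := by
    have := hcurl z hz
    have : 0 ≤ |q| * ‖z‖ / 2 - ‖curl H z‖ := by linarith
    positivity
  have hdiv (z : R3) : divg (fun y => q • energyFlux q H y) z = 0 := by
    rw [divg_smul (differentiableAt_const q)
      ((contDiff_energyFlux (n := 1) hH).differentiable one_ne_zero z), h.divg_energyFlux_eq hH]
    simp
  have hflux : ⟪y, q • energyFlux q H y⟫ = 0 :=
    inner_eq_zero_of_divg_eq_zero ((contDiff_energyFlux (n := 1) hH).const_smul q) hdiv hr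
      (fun z hz => (hlower z hz).trans le_inner_smul_energyFlux) hy
  have hcoeff : 0 < |q| * ‖y‖ * (|q| * ‖y‖ / 2 - ‖curl H y‖) := by
    have := hcurl y hy
    have := norm_nonneg (curl H y)
    exact mul_pos (by linarith) (by linarith)
  have hle := hflux ▸ (le_inner_smul_energyFlux (H := H) (q := q) (y := y))
  exact norm_eq_zero.1 (pow_eq_zero_iff two_ne_zero |>.1
    (le_antisymm (nonpos_of_mul_nonpos_right hle hcoeff) (sq_nonneg _)))

/-- On the smallest ball off which `2 ‖∇ × H‖ < |q| ‖y‖`, some boundary point `y₀` violates that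
inequality; as `H` vanishes outside, `∇ × H` vanishes at `y₀` by continuity, hence `y₀ = 0`. -/
lemma IsProfile.eq_zero_of_norm_curl_le (h : IsProfile (3 * q / 2) q H) (hq : q ≠ 0)
    (hH : ContDiff ℝ 2 H) {K : ℝ} (hK : ∀ y, ‖curl H y‖ ≤ K) : H = 0 := by
  have hcurl : Continuous (curl H) := (contDiff_curl (n := 1) hH).continuous
  let S : Set R3 := {y | |q| * ‖y‖ ≤ 2 * ‖curl H y‖}
  have hScompact : IsCompact S := by
    refine (isCompact_closedBall (0 : R3) (2 * K / |q|)).of_isClosed_subset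
      (isClosed_le (by fun_prop) (by fun_prop)) fun y hy => ?_
    have hy : |q| * ‖y‖ ≤ 2 * ‖curl H y‖ := hy
    rw [mem_closedBall_zero_iff, le_div_iff₀' (abs_pos.2 hq)]
    linarith [hK y]
  obtain ⟨y₀, hy₀S, hy₀max⟩ := hScompact.exists_isMaxOn (f := norm) ⟨0, by simp [S]⟩
    continuous_norm.continuousOn
  let U : Set R3 := (Metric.closedBall 0 ‖y₀‖)ᶜ
  have hHU : EqOn H 0 U := fun y hy => by
    refine h.eq_zero_of_lt_norm hH (norm_nonneg y₀) (fun z hz => ?_) (by simpa [U] using hy)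
    by_contra! hz'
    exact hz.not_ge (hy₀max hz')
  have hcurlU : EqOn (curl H) 0 U := fun y hy => by
    have hH0 : H =ᶠ[nhds y] 0 :=
      hHU.eventuallyEq_of_mem (Metric.isClosed_closedBall.isOpen_compl.mem_nhds hy)
    simp [curl_eq_curlCLM (hH.differentiable two_ne_zero y), hH0.fderiv_eq]
  have hclosure : closure U = (Metric.ball 0 ‖y₀‖)ᶜ := by
    rw [closure_compl, interior_closedBall']
  have hy₀ : ‖y₀‖ = 0 := by
    have hcurl₀ : curl H y₀ = 0 :=
      hcurlU.closure hcurl continuous_zero (hclosure ▸ by simp)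
    have : |q| * ‖y₀‖ ≤ 0 := by simpa [S, hcurl₀] using hy₀S
    exact (nonpos_of_mul_nonpos_right this (abs_pos.2 hq)).antisymm (norm_nonneg y₀)
  exact funext fun y => hHU.closure hH.continuous continuous_zero (hclosure ▸ by simp [hy₀])

theorem IsProfile.eq_zero (h : IsProfile p q H) (hpq : ¬(p = 0 ∧ q = 0)) (hH : ContDiff ℝ 2 H)
    (hL2 : MemLp H 2) {K : ℝ} (hK : ∀ y, ‖curl H y‖ ≤ K) : H = 0 := by
  rcases h.coeff_eq_or_eq_zero hH hL2 hK with rfl | hH0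
  · exact h.eq_zero_of_norm_curl_le (fun hq => hpq (by simp [hq])) hH hK
  · exact hH0

end Profile

section PseudoSelfSimilar

section Basic

variable {E F : Type*} [NormedAddCommGroup E] [NormedSpace ℝ E] [NormedAddCommGroup F]
  [NormedSpace ℝ F] {lam mu : ℝ → ℝ} {H : E → F} {t : ℝ}

/-- The pseudo-self-similar field `(t, x) ↦ μ(t) H(λ(t) x)` with profile `H`. -/
def pseudoSelfSimilar (lam mu : ℝ → ℝ) (H : E → F) (t : ℝ) (x : E) : F :=
  mu t • H (lam t • x)

lemma hasDerivAt_pseudoSelfSimilar (hlam : DifferentiableAt ℝ lam t)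
    (hmu : DifferentiableAt ℝ mu t) {x : E} (hH : DifferentiableAt ℝ H (lam t • x)) :
    HasDerivAt (fun τ => pseudoSelfSimilar lam mu H τ x)
      (mu t • deriv lam t • fderiv ℝ H (lam t • x) x + deriv mu t • H (lam t • x)) t := by
  rw [← map_smul]
  exact hmu.hasDerivAt.smul
    (hH.hasFDerivAt.comp_hasDerivAt t (hlam.hasDerivAt.smul_const x))

lemma memLp_pseudoSelfSimilar_iff [FiniteDimensional ℝ E] [MeasurableSpace E] [BorelSpace E]
    {ν : Measure E} [ν.IsAddHaarMeasure] {p : ENNReal} (hlam : lam t ≠ 0) (hmu : mu t ≠ 0) :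
    MemLp (pseudoSelfSimilar lam mu H t) p ν ↔ MemLp H p ν := by
  refine ⟨fun h => ?_, fun h => (memLp_comp_smul hlam h).const_smul (mu t)⟩
  simpa [pseudoSelfSimilar, Pi.smul_def, smul_smul, hlam, hmu] using
    (memLp_comp_smul (inv_ne_zero hlam) h).const_smul (mu t)⁻¹

end Basic

variable {lam mu : ℝ → ℝ} {H : R3 → R3} {t T : ℝ}

/-- `B` solves the evolution equation `∂ₜB + ∇ × ((∇ × B) × B) = 0` at time `t`, without the
divergence constraint. -/
def IsHallFlowAt (B : ℝ → R3 → R3) (t : ℝ) : Prop :=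
  ∀ x, deriv (fun τ => B τ x) t + hallTerm (B t) x = 0

lemma IsHallFlowAt.isProfile (h : IsHallFlowAt (pseudoSelfSimilar lam mu H) t)
    (hH : ContDiff ℝ 2 H) (hlam : DifferentiableAt ℝ lam t) (hmu : DifferentiableAt ℝ mu t)
    (hlam0 : lam t ≠ 0) (hmu0 : mu t ≠ 0) :
    IsProfile (deriv mu t / (mu t ^ 2 * lam t ^ 2)) (deriv lam t / (mu t * lam t ^ 3)) H := by
  intro y
  have hy := h ((lam t)⁻¹ • y)
  have hHall : hallTerm (pseudoSelfSimilar lam mu H t) ((lam t)⁻¹ • y) =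
      (mu t ^ 2 * lam t ^ 2) • hallTerm H y :=
    (hallTerm_const_smul_comp_smul hH _ _ _).trans (by rw [smul_inv_smul₀ hlam0])
  rw [(hasDerivAt_pseudoSelfSimilar hlam hmu (hH.differentiable two_ne_zero _)).deriv, hHall,
    smul_inv_smul₀ hlam0, map_smul] at hy
  have hscaled := congrArg (fun v => (mu t ^ 2 * lam t ^ 2)⁻¹ • v) hy
  simp only [smul_add, smul_smul, smul_zero] at hscaled
  rw [← hscaled]
  match_scalars <;> field_simp

lemma exists_norm_curl_le_of_bddAbove_hessian (hH : ContDiff ℝ 2 H) (hlam0 : lam t ≠ 0)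
    (hmu0 : mu t ≠ 0) (hL2 : MemLp H 2)
    (hbdd : BddAbove (range fun x => ‖iteratedFDeriv ℝ 2 (pseudoSelfSimilar lam mu H t) x‖)) :
    ∃ K, ∀ y, ‖curl H y‖ ≤ K := by
  obtain ⟨M, hM⟩ := hbdd
  have hB : ContDiff ℝ 2 (pseudoSelfSimilar lam mu H t) :=
    (hH.comp (contDiff_const_smul _)).const_smul (mu t)
  have hBd := hB.differentiable two_ne_zero
  have hLip := lipschitzWith_fderiv_of_norm_iteratedFDeriv_two_le hB (M := M.toNNReal)
    fun x => (hM ⟨x, rfl⟩).trans (le_coe_toNNReal M)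
  obtain ⟨K, hK⟩ := exists_norm_fderiv_le_of_memLp hBd hLip two_ne_zero ENNReal.ofNat_ne_top
    ((memLp_pseudoSelfSimilar_iff hlam0 hmu0).2 hL2)
  refine ⟨‖(mu t * lam t)⁻¹‖ * (‖curlCLM‖ * K), fun y => ?_⟩
  have hcurl : curl H y =
      (mu t * lam t)⁻¹ • curl (pseudoSelfSimilar lam mu H t) ((lam t)⁻¹ • y) := by
    have hscale : curl (pseudoSelfSimilar lam mu H t) ((lam t)⁻¹ • y) = _ :=
      curl_const_smul_comp_smul _ _ (hH.differentiable two_ne_zero _)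
    rw [hscale, smul_inv_smul₀ hlam0, inv_smul_smul₀ (mul_ne_zero hmu0 hlam0)]
  rw [hcurl, norm_smul]
  gcongr
  exact (norm_curl_le (hBd _)).trans (by gcongr; exact hK _)

lemma eq_left_of_deriv_eq_zero {f : ℝ → ℝ} {a b : ℝ}
    (hf : ∀ s ∈ Ico a b, DifferentiableAt ℝ f s) (hf' : ∀ s ∈ Ico a b, deriv f s = 0)
    {s : ℝ} (hs : s ∈ Ico a b) : f s = f a :=
  constant_of_has_deriv_right_zero
    (fun u hu => (hf u ⟨hu.1, hu.2.trans_lt hs.2⟩).continuousAt.continuousWithinAt)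
    (fun u hu => have hu' : u ∈ Ico a b := ⟨hu.1, hu.2.trans hs.2⟩
      hf' u hu' ▸ (hf u hu').hasDerivAt.hasDerivWithinAt) s ⟨hs.1, le_rfl⟩

lemma not_tendsto_integral_atTop_of_eqOn_const {f : ℝ → ℝ} {a b c : ℝ} (hab : a < b)
    (hf : ∀ s ∈ Ico a b, f s = c) :
    ¬Filter.Tendsto (fun t => ∫ s in a..t, f s) (nhdsWithin b (Iio b)) Filter.atTop := by
  have hint : (fun t => (t - a) * c) =ᶠ[nhdsWithin b (Iio b)] fun t => ∫ s in a..t, f s := by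
    filter_upwards [Ioo_mem_nhdsLT hab] with t ht
    rw [intervalIntegral.integral_congr (g := fun _ => c) fun s hs => ?_,
      intervalIntegral.integral_const, smul_eq_mul]
    rw [uIcc_of_le ht.1.le] at hs
    exact hf s ⟨hs.1, hs.2.trans_lt ht.2⟩
  have hlim : Filter.Tendsto (fun t => (t - a) * c) (nhdsWithin b (Iio b))
      (nhds ((b - a) * c)) :=
    (by fun_prop : Continuous fun t => (t - a) * c).continuousWithinAt
  exact fun h => not_tendsto_nhds_of_tendsto_atTop h _ (hlim.congr' hint)

theorem pseudoSelfSimilar_eq_initial (hlam : ∀ t ∈ Ico 0 T, DifferentiableAt ℝ lam t)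
    (hmu : ∀ t ∈ Ico 0 T, DifferentiableAt ℝ mu t) (hlam0 : ∀ t ∈ Ico 0 T, lam t ≠ 0)
    (hmu0 : ∀ t ∈ Ico 0 T, mu t ≠ 0) (hH : ContDiff ℝ 2 H)
    (hflow : ∀ t ∈ Ico 0 T, IsHallFlowAt (pseudoSelfSimilar lam mu H) t) (hL2 : MemLp H 2)
    {K : ℝ} (hK : ∀ y, ‖curl H y‖ ≤ K) (ht : t ∈ Ico 0 T) :
    pseudoSelfSimilar lam mu H t = pseudoSelfSimilar lam mu H 0 := by
  by_cases hstat : ∀ s ∈ Ico 0 T, deriv mu s = 0 ∧ deriv lam s = 0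
  · unfold pseudoSelfSimilar
    rw [eq_left_of_deriv_eq_zero hmu (fun s hs => (hstat s hs).1) ht,
      eq_left_of_deriv_eq_zero hlam (fun s hs => (hstat s hs).2) ht]
  · push Not at hstat
    obtain ⟨s, hs, hs'⟩ := hstat
    have hpq : ¬(deriv mu s / (mu s ^ 2 * lam s ^ 2) = 0 ∧
        deriv lam s / (mu s * lam s ^ 3) = 0) := by
      simpa [hmu0 s hs, hlam0 s hs] using hs'
    have hH0 : H = 0 :=
      ((hflow s hs).isProfile hH (hlam s hs) (hmu s hs) (hlam0 s hs) (hmu0 s hs)).eq_zero hpq hH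
        hL2 hK
    funext x
    simp [pseudoSelfSimilar, hH0]

theorem no_pseudo_self_similar_general (hlam : ∀ t ∈ Ico 0 T, DifferentiableAt ℝ lam t)
    (hmu : ∀ t ∈ Ico 0 T, DifferentiableAt ℝ mu t) (hlam0 : ∀ t ∈ Ico 0 T, lam t ≠ 0)
    (hmu0 : ∀ t ∈ Ico 0 T, mu t ≠ 0) (hH : ContDiff ℝ 2 H)
    (hflow : ∀ t ∈ Ico 0 T, IsHallFlowAt (pseudoSelfSimilar lam mu H) t)
    (ht : t ∈ Ico 0 T) (hL2 : eLpNorm (pseudoSelfSimilar lam mu H t) 2 volume < ⊤) :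
    ¬Filter.Tendsto
      (fun t => ∫ τ in (0 : ℝ)..t, ⨆ x, ‖iteratedFDeriv ℝ 2 (pseudoSelfSimilar lam mu H τ) x‖)
      (nhdsWithin T (Iio T)) Filter.atTop := by
  have hT : 0 < T := ht.1.trans_lt ht.2
  have hcont : Continuous (pseudoSelfSimilar lam mu H t) :=
    (hH.continuous.comp (continuous_const_smul _)).const_smul (mu t)
  have hHL2 : MemLp H 2 := (memLp_pseudoSelfSimilar_iff (hlam0 t ht) (hmu0 t ht)).1
    ⟨hcont.aestronglyMeasurable, hL2⟩
  by_cases hbdd : ∃ τ ∈ Ico 0 T,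
      BddAbove (range fun x => ‖iteratedFDeriv ℝ 2 (pseudoSelfSimilar lam mu H τ) x‖)
  · obtain ⟨τ, hτ, hbdd⟩ := hbdd
    obtain ⟨K, hK⟩ :=
      exists_norm_curl_le_of_bddAbove_hessian hH (hlam0 τ hτ) (hmu0 τ hτ) hHL2 hbdd
    refine not_tendsto_integral_atTop_of_eqOn_const hT
      (c := ⨆ x, ‖iteratedFDeriv ℝ 2 (pseudoSelfSimilar lam mu H 0) x‖) fun s hs => ?_
    rw [pseudoSelfSimilar_eq_initial hlam hmu hlam0 hmu0 hH hflow hHL2 hK hs]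
  · -- An unbounded Hessian makes the real supremum take the junk value `0`.
    push Not at hbdd
    exact not_tendsto_integral_atTop_of_eqOn_const hT fun s hs =>
      Real.iSup_of_not_bddAbove (hbdd s hs)

end PseudoSelfSimilar

/-- Theorem 1.4: no pseudo-self-similar blowup solution when the scaling
functions are not of the critical power form. -/
theorem no_pseudo_self_similar (T : ℝ) (hT : 0 < T) (lam mu : ℝ → ℝ)
    (hlamC : ContDiffOn ℝ 1 lam (Set.Iio T)) (hmuC : ContDiffOn ℝ 1 mu (Set.Iio T))
    (hlam0 : ∀ t < T, lam t ≠ 0) (hmu0 : ∀ t < T, mu t ≠ 0)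
    (hnot : ¬ ∃ a₁ a₂ : ℝ, ∀ t < T,
      lam t = a₁ * (T - t) ^ (-(2 / 7) : ℝ) ∧ mu t = a₂ * (T - t) ^ (-(3 / 7) : ℝ))
    (H : R3 → R3) (hH : ContDiff ℝ 2 H)
    (B : ℝ → R3 → R3) (hBdef : ∀ t x, B t x = mu t • H (lam t • x))
    (hB : ∀ t ∈ Set.Ico 0 T, ∀ x, IsEMHDAt B t x) :
    ¬ (essSup (fun t => eLpNorm (B t) 2 volume) (volume.restrict (Set.Ioo 0 T)) < ⊤
      ∧ Filter.Tendsto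
          (fun t => ∫ τ in (0:ℝ)..t, ⨆ x : R3, ‖iteratedFDeriv ℝ 2 (B τ) x‖)
          (nhdsWithin T (Set.Iio T)) Filter.atTop) := by
  obtain rfl : B = pseudoSelfSimilar lam mu H := funext₂ hBdef
  rintro ⟨hL2, hHessian⟩
  obtain ⟨t₀, ht₀, ht₀L2⟩ := Measure.exists_mem_of_measure_ne_zero_of_ae (by simpa using hT)
    (ae_lt_of_essSup_lt hL2)
  have hdiff {f : ℝ → ℝ} (hf : ContDiffOn ℝ 1 f (Iio T)) : ∀ t ∈ Ico 0 T, DifferentiableAt ℝ f t :=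
    fun t ht => (hf.differentiableOn one_ne_zero).differentiableAt (Iio_mem_nhds ht.2)
  exact no_pseudo_self_similar_general (hdiff hlamC) (hdiff hmuC) (fun t ht => hlam0 t ht.2)
    (fun t ht => hmu0 t ht.2) hH (fun t ht x => (hB t ht x).1) (Ioo_subset_Ico_self ht₀) ht₀L2
    hHessian
end
end
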